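/- arXiv:2211.16682 — 4 statements merged into one kernel-verified Lean document; each statement's English description precedes it below -/
import Mathlib

section
/- Let 1 ≤ δ ≤ β ≤ m, let x ∈ range(Aᵀ), and for each subset τ ⊆ {1,…,m} of cardinality β let I(τ) be a greedy δ-subset of τ for x and let x_τ⁺ be the exact block Kaczmarz update of x with respect to I(τ). Set Λ = max over all τ of λ_max(A_{I(τ)}ᵀ A_{I(τ)}), assume D := Σ_τ min_{i∈I(τ)} (A^{(i)}x − b_i)² > 0, and set ξ = (Σ_τ ‖A_τ x − b_τ‖₂²) / D. Then (1/C(m,β)) Σ_τ ‖x_τ⁺ − x⋆‖₂² ≤ (1 − (δ/ξ)·(β/m)·λ_min⁺(AᵀA)/Λ) · ‖x − x⋆‖₂². -/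
open Matrix Finset

/-- The largest eigenvalue of a square real matrix (as the supremum of its
eigenvalue set). -/
noncomputable def maxEig {k : ℕ} (M : Matrix (Fin k) (Fin k) ℝ) : ℝ :=
  sSup {μ : ℝ | Module.End.HasEigenvalue (Matrix.mulVecLin M) μ}

/-- The smallest positive eigenvalue of a square real matrix. -/
noncomputable def minPosEig {k : ℕ} (M : Matrix (Fin k) (Fin k) ℝ) : ℝ :=
  sInf {μ : ℝ | Module.End.HasEigenvalue (Matrix.mulVecLin M) μ ∧ 0 < μ}

/-- The restriction of `A` to the rows indexed by `I`. -/
def rowSub {m n : ℕ} (A : Matrix (Fin m) (Fin n) ℝ) (I : Finset (Fin m)) :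
    Matrix {i : Fin m // i ∈ I} (Fin n) ℝ :=
  fun i j => A i.1 j

/-- Squared Euclidean norm. -/
noncomputable def sqNorm {k : ℕ} (v : Fin k → ℝ) : ℝ := ∑ j, (v j) ^ 2

/-- `xp` is the exact block Kaczmarz update of `x` with respect to the row
index set `I`: it satisfies the equations indexed by `I` and minimizes the
distance to `x` among all such points (hence is the orthogonal projection of
`x` onto the affine solution set, which is the unique such minimizer). -/
def IsKaczmarzUpdate {m n : ℕ} (A : Matrix (Fin m) (Fin n) ℝ)
    (b : Fin m → ℝ) (I : Finset (Fin m)) (x xp : Fin n → ℝ) : Prop :=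
  (∀ i ∈ I, A i ⬝ᵥ xp = b i) ∧
  ∀ y : Fin n → ℝ, (∀ i ∈ I, A i ⬝ᵥ y = b i) → sqNorm (xp - x) ≤ sqNorm (y - x)

/-- `I` is a greedy `δ`-subset of `τ` for `x`: `I ⊆ τ`, `|I| = δ`, and the
residual entries on `I` dominate (in absolute value) those on `τ \ I`. -/
def IsGreedySubset {m n : ℕ} (A : Matrix (Fin m) (Fin n) ℝ) (b : Fin m → ℝ)
    (x : Fin n → ℝ) (δ : ℕ) (τ I : Finset (Fin m)) : Prop :=
  I ⊆ τ ∧ I.card = δ ∧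
    ∀ i ∈ I, ∀ j ∈ τ \ I, |A j ⬝ᵥ x - b j| ≤ |A i ⬝ᵥ x - b i|

/-!
Projecting `x` onto the equations of a block splits the squared error by Pythagoras: it drops by
exactly the squared length of the step. A step that cancels the residuals of a block `I` has
squared length at least the sum of the squared residuals over `I` divided by the largest eigenvalue
of the block Gram matrix, and that sum is at least `#I` times its smallest term. Summed over the
blocks, the total drop is at least `δ D / Λ`. By double counting, `ξ D` is `β / m` times the number
of blocks times the full squared residual, and on the row space the latter dominates the smallest
positive eigenvalue of `Aᵀ A` times the squared error.
-/

section SqNorm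

variable {k : ℕ}

theorem sqNorm_eq_dotProduct (v : Fin k → ℝ) : sqNorm v = v ⬝ᵥ v := by
  simp only [sqNorm, dotProduct, sq]

theorem sqNorm_nonneg (v : Fin k → ℝ) : 0 ≤ sqNorm v :=
  Finset.sum_nonneg fun _ _ => sq_nonneg _

theorem dotProduct_eq_zero_of_forall_sqNorm_le {d z : Fin k → ℝ}
    (hmin : ∀ t : ℝ, sqNorm d ≤ sqNorm (d + t • z)) : d ⬝ᵥ z = 0 := by
  have hquad (t : ℝ) : 0 ≤ (z ⬝ᵥ z) * (t * t) + 2 * (d ⬝ᵥ z) * t + 0 := by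
    have h := hmin t
    simp only [sqNorm_eq_dotProduct, dotProduct_add, add_dotProduct, dotProduct_smul,
      smul_dotProduct, smul_eq_mul, dotProduct_comm z d] at h
    linarith
  have hdiscrim : (2 * (d ⬝ᵥ z)) ^ 2 ≤ 0 := by simpa [discrim] using discrim_le_zero hquad
  simpa using (sq_nonpos_iff _).mp hdiscrim

end SqNorm

section Spectral

variable {ι ι' : Type*} [Fintype ι] [Fintype ι'] {k : ℕ}

theorem dotProduct_eq_sum_orthonormalBasis (e : OrthonormalBasis ι' ℝ (EuclideanSpace ℝ ι))
    (v w : ι → ℝ) : v ⬝ᵥ w = ∑ j, (e j ⬝ᵥ v) * (e j ⬝ᵥ w) := by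
  have h := e.sum_inner_mul_inner (WithLp.toLp 2 v) (WithLp.toLp 2 w)
  simp only [EuclideanSpace.inner_eq_star_dotProduct, star_trivial] at h
  rw [dotProduct_comm, ← h]
  exact Finset.sum_congr rfl fun j _ => by rw [dotProduct_comm w]

theorem dotProduct_mulVec_eq_sum_eigenvalues [DecidableEq ι] {M : Matrix ι ι ℝ}
    (hM : M.IsHermitian) (v : ι → ℝ) :
    v ⬝ᵥ (M *ᵥ v) = ∑ j, hM.eigenvalues j * (hM.eigenvectorBasis j ⬝ᵥ v) ^ 2 := by
  rw [dotProduct_eq_sum_orthonormalBasis hM.eigenvectorBasis]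
  refine Finset.sum_congr rfl fun j _ => ?_
  have hadjoint : hM.eigenvectorBasis j ⬝ᵥ (M *ᵥ v)
      = hM.eigenvalues j * (hM.eigenvectorBasis j ⬝ᵥ v) := by
    rw [dotProduct_mulVec, ← mulVec_transpose, ← conjTranspose_eq_transpose_of_trivial, hM.eq,
      hM.mulVec_eigenvectorBasis, smul_dotProduct, smul_eq_mul]
  rw [hadjoint]
  ring

theorem hasEigenvalue_mulVecLin_eigenvalues [DecidableEq ι] {M : Matrix ι ι ℝ}
    (hM : M.IsHermitian) (j : ι) :
    Module.End.HasEigenvalue (mulVecLin M) (hM.eigenvalues j) := by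
  rw [← toLin'_apply', Module.End.hasEigenvalue_iff_mem_spectrum, spectrum_toLin']
  exact hM.eigenvalues_mem_spectrum_real j

theorem sqNorm_eq_sum_orthonormalBasis (e : OrthonormalBasis ι' ℝ (EuclideanSpace ℝ (Fin k)))
    (v : Fin k → ℝ) : sqNorm v = ∑ j, (e j ⬝ᵥ v) ^ 2 := by
  simp only [sqNorm_eq_dotProduct, dotProduct_eq_sum_orthonormalBasis e v v, sq]

theorem dotProduct_mulVec_le_maxEig_mul_sqNorm {M : Matrix (Fin k) (Fin k) ℝ}
    (hM : M.IsHermitian) (v : Fin k → ℝ) :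
    v ⬝ᵥ (M *ᵥ v) ≤ maxEig M * sqNorm v := by
  rw [dotProduct_mulVec_eq_sum_eigenvalues hM,
    sqNorm_eq_sum_orthonormalBasis hM.eigenvectorBasis, Finset.mul_sum]
  gcongr with j
  exact le_csSup (Module.End.finite_hasEigenvalue _).bddAbove
    (hasEigenvalue_mulVecLin_eigenvalues hM j)

theorem maxEig_nonneg {M : Matrix (Fin k) (Fin k) ℝ} (hM : M.PosSemidef) : 0 ≤ maxEig M := by
  refine Real.sSup_nonneg fun μ hμ => ?_
  obtain ⟨v, hv⟩ := hμ.exists_hasEigenvector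
  have hform : 0 ≤ μ * (v ⬝ᵥ v) := by
    have h := hM.dotProduct_mulVec_nonneg v
    rwa [star_trivial, ← mulVecLin_apply, hv.apply_eq_smul, dotProduct_smul, smul_eq_mul] at h
  have hpos : 0 < v ⬝ᵥ v := dotProduct_star_self_pos_iff.mpr hv.2
  exact nonneg_of_mul_nonneg_left hform hpos

theorem minPosEig_mul_sqNorm_le_dotProduct_mulVec {M : Matrix (Fin k) (Fin k) ℝ}
    (hM : M.PosSemidef) {v : Fin k → ℝ} (hv : ∀ u, M *ᵥ u = 0 → u ⬝ᵥ v = 0) :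
    minPosEig M * sqNorm v ≤ v ⬝ᵥ (M *ᵥ v) := by
  rw [dotProduct_mulVec_eq_sum_eigenvalues hM.isHermitian,
    sqNorm_eq_sum_orthonormalBasis hM.isHermitian.eigenvectorBasis, Finset.mul_sum]
  refine Finset.sum_le_sum fun j _ => ?_
  rcases (hM.eigenvalues_nonneg j).eq_or_lt with hzero | hpos
  · have hker : hM.isHermitian.eigenvectorBasis j ⬝ᵥ v = 0 := by
      apply hv
      rw [hM.isHermitian.mulVec_eigenvectorBasis, ← hzero, zero_smul]
    simp [hker]
  · gcongr
    exact csInf_le ⟨0, fun μ hμ => hμ.2.le⟩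
      ⟨hasEigenvalue_mulVecLin_eigenvalues hM.isHermitian j, hpos⟩

end Spectral

section Gram

variable {ι κ : Type*} [Fintype ι] {n : ℕ}

theorem posSemidef_transpose_mul_self [Finite κ] (B : Matrix ι κ ℝ) : (Bᵀ * B).PosSemidef := by
  simpa only [conjTranspose_eq_transpose_of_trivial] using posSemidef_conjTranspose_mul_self B

theorem dotProduct_transpose_mul_self_mulVec [Fintype κ] (B : Matrix ι κ ℝ) (v : κ → ℝ) :
    v ⬝ᵥ ((Bᵀ * B) *ᵥ v) = ∑ i, (B i ⬝ᵥ v) ^ 2 := by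
  rw [← mulVec_mulVec, dotProduct_mulVec, vecMul_transpose]
  exact Finset.sum_congr rfl fun i _ => (sq _).symm

theorem minPosEig_mul_sqNorm_le_sum_sq (B : Matrix ι (Fin n) ℝ) {v : Fin n → ℝ}
    (hv : v ∈ Set.range Bᵀ.mulVec) :
    minPosEig (Bᵀ * B) * sqNorm v ≤ ∑ i, (B i ⬝ᵥ v) ^ 2 := by
  obtain ⟨w, rfl⟩ := hv
  rw [← dotProduct_transpose_mul_self_mulVec]
  refine minPosEig_mul_sqNorm_le_dotProduct_mulVec (posSemidef_transpose_mul_self B) fun u hu => ?_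
  have hBu : B *ᵥ u = 0 := by
    rwa [← conjTranspose_eq_transpose_of_trivial, conjTranspose_mul_self_mulVec_eq_zero] at hu
  rw [dotProduct_mulVec, vecMul_transpose, hBu, zero_dotProduct]

theorem minPosEig_mul_sqNorm_sub_le_sum_residual_sq {B : Matrix ι (Fin n) ℝ} {b : ι → ℝ}
    {x y : Fin n → ℝ} (hy : B *ᵥ y = b) (hxy : x - y ∈ Set.range Bᵀ.mulVec) :
    minPosEig (Bᵀ * B) * sqNorm (x - y) ≤ ∑ i, (B i ⬝ᵥ x - b i) ^ 2 := by
  have hresidual (i : ι) : B i ⬝ᵥ x - b i = B i ⬝ᵥ (x - y) := by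
    rw [dotProduct_sub, ← congrFun hy i, mulVec]
  simpa only [hresidual] using minPosEig_mul_sqNorm_le_sum_sq B hxy

theorem sum_sq_le_maxEig_mul_sqNorm {m : ℕ} (A : Matrix (Fin m) (Fin n) ℝ) (I : Finset (Fin m))
    (v : Fin n → ℝ) :
    ∑ i ∈ I, (A i ⬝ᵥ v) ^ 2 ≤ maxEig ((rowSub A I)ᵀ * rowSub A I) * sqNorm v := by
  rw [← Finset.sum_coe_sort I]
  exact (dotProduct_transpose_mul_self_mulVec (rowSub A I) v).ge.trans
    (dotProduct_mulVec_le_maxEig_mul_sqNorm (posSemidef_transpose_mul_self _).isHermitian v)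

end Gram

section FiniteSums

variable {ι : Type*}

theorem card_mul_card_filter_mem_powersetCard [DecidableEq ι] {s : Finset ι} {i : ι} (hi : i ∈ s)
    (k : ℕ) : #s * #{τ ∈ s.powersetCard k | i ∈ τ} = k * (#s).choose k := by
  cases k with
  | zero => simp
  | succ k =>
    have hcard := card_filter_powersetCard_subset {i} s (k + 1) (by simpa using hi) (by simp)
    obtain ⟨l, hl⟩ := Nat.exists_eq_add_of_le' (Finset.card_pos.mpr ⟨i, hi⟩)
    simp only [singleton_subset_iff, card_singleton, hl, Nat.add_sub_cancel] at hcard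
    rw [hcard, hl, Nat.add_one_mul_choose_eq, mul_comm]

theorem card_nsmul_sum_powersetCard_sum {M : Type*} [AddCommMonoid M] (s : Finset ι) (k : ℕ)
    (f : ι → M) :
    #s • ∑ τ ∈ s.powersetCard k, ∑ i ∈ τ, f i = (k * (#s).choose k) • ∑ i ∈ s, f i := by
  classical
  have hswap : ∑ τ ∈ s.powersetCard k, ∑ i ∈ τ, f i
      = ∑ i ∈ s, #{τ ∈ s.powersetCard k | i ∈ τ} • f i := by
    simp only [← Finset.sum_const]
    refine Finset.sum_comm' fun τ i => ?_
    simp only [Finset.mem_filter, Finset.mem_powersetCard]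
    exact ⟨fun ⟨hτ, hi⟩ => ⟨⟨hτ, hi⟩, hτ.1 hi⟩, fun h => h.1⟩
  rw [hswap, Finset.smul_sum, Finset.smul_sum]
  refine Finset.sum_congr rfl fun i hi => ?_
  rw [← mul_smul, card_mul_card_filter_mem_powersetCard hi]

theorem sum_powersetCard_sum {K : Type*} [Field K] [CharZero K] {s : Finset ι} {k : ℕ}
    (hk : k ≤ #s) (f : ι → K) :
    ∑ τ ∈ s.powersetCard k, ∑ i ∈ τ, f i = (#s).choose k * (k / #s * ∑ i ∈ s, f i) := by
  rcases s.eq_empty_or_nonempty with rfl | hs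
  · obtain rfl : k = 0 := by simpa using hk
    simp
  have hcard : (#s : K) ≠ 0 := Nat.cast_ne_zero.mpr hs.card_pos.ne'
  have hcount := card_nsmul_sum_powersetCard_sum s k f
  simp only [nsmul_eq_mul, Nat.cast_mul] at hcount
  apply mul_left_cancel₀ hcard
  rw [hcount]
  field_simp

theorem card_mul_sInf_image_le_sum (s : Finset ι) (f : ι → ℝ) :
    #s * sInf (f '' s) ≤ ∑ i ∈ s, f i := by
  rw [← nsmul_eq_mul]
  exact Finset.card_nsmul_le_sum _ _ _ fun i hi =>
    csInf_le (s.finite_toSet.image f).bddBelow ⟨i, hi, rfl⟩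

theorem sInf_image_le_sum {s : Finset ι} {f : ι → ℝ} (hf : ∀ i ∈ s, 0 ≤ f i) :
    sInf (f '' s) ≤ ∑ i ∈ s, f i := by
  rcases s.eq_empty_or_nonempty with rfl | ⟨i, hi⟩
  -- In `ℝ`, the infimum of the empty set is `0`.
  · simp
  · exact (csInf_le (s.finite_toSet.image f).bddBelow ⟨i, hi, rfl⟩).trans
      (Finset.single_le_sum hf hi)

theorem sum_sInf_image_le_card_mul_sum [Fintype ι] {κ : Type*} {f : ι → ℝ} (hf : ∀ i, 0 ≤ f i)
    (T : Finset κ) (I : κ → Finset ι) :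
    ∑ τ ∈ T, sInf (f '' I τ) ≤ #T * ∑ i, f i := by
  rw [← nsmul_eq_mul]
  exact Finset.sum_le_card_nsmul _ _ _ fun τ _ => (sInf_image_le_sum fun i _ => hf i).trans
    (Finset.sum_le_univ_sum_of_nonneg hf)

theorem le_sSup_of_mem_finset {α : Type*} [ConditionallyCompleteLattice α] {s : Finset ι}
    (f : ι → α) {i : ι} (hi : i ∈ s) : f i ≤ sSup {a | ∃ j ∈ s, a = f j} := by
  have himage : {a | ∃ j ∈ s, a = f j} = f '' s := by
    ext a
    simp only [Set.mem_ofPred_eq, Set.mem_image, Finset.mem_coe, eq_comm]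
  have : Nonempty α := ⟨f i⟩
  rw [himage]
  exact le_csSup (s.finite_toSet.image f).bddAbove ⟨i, hi, rfl⟩

end FiniteSums

section Projection

variable {m n : ℕ} {A : Matrix (Fin m) (Fin n) ℝ} {b : Fin m → ℝ} {I : Finset (Fin m)}
  {x xp y : Fin n → ℝ}

theorem IsKaczmarzUpdate.dotProduct_sub_eq_zero (h : IsKaczmarzUpdate A b I x xp)
    (hy : ∀ i ∈ I, A i ⬝ᵥ y = b i) : (xp - x) ⬝ᵥ (y - xp) = 0 := by
  refine dotProduct_eq_zero_of_forall_sqNorm_le fun t => ?_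
  rw [sub_add_eq_add_sub]
  refine h.2 _ fun i hi => ?_
  rw [dotProduct_add, dotProduct_smul, dotProduct_sub, h.1 i hi, hy i hi, sub_self, smul_zero,
    add_zero]

theorem IsKaczmarzUpdate.sqNorm_sub_eq_sub (h : IsKaczmarzUpdate A b I x xp)
    (hy : ∀ i ∈ I, A i ⬝ᵥ y = b i) : sqNorm (xp - y) = sqNorm (x - y) - sqNorm (xp - x) := by
  have horth := h.dotProduct_sub_eq_zero hy
  simp only [sqNorm_eq_dotProduct, dotProduct_sub, sub_dotProduct, dotProduct_comm y,
    dotProduct_comm xp x] at horth ⊢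
  linarith

theorem IsKaczmarzUpdate.card_mul_sInf_le (h : IsKaczmarzUpdate A b I x xp) :
    #I * sInf ((fun i => (A i ⬝ᵥ x - b i) ^ 2) '' I)
      ≤ maxEig ((rowSub A I)ᵀ * rowSub A I) * sqNorm (xp - x) :=
  calc
    _ ≤ ∑ i ∈ I, (A i ⬝ᵥ x - b i) ^ 2 := card_mul_sInf_image_le_sum _ _
    _ = ∑ i ∈ I, (A i ⬝ᵥ (xp - x)) ^ 2 :=
      Finset.sum_congr rfl fun i hi => by rw [dotProduct_sub, h.1 i hi, sub_sq_comm]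
    _ ≤ _ := sum_sq_le_maxEig_mul_sqNorm A I _

end Projection

section BlockFamily

variable {κ : Type*} {m n δ : ℕ} {A : Matrix (Fin m) (Fin n) ℝ} {b : Fin m → ℝ}
  {x y : Fin n → ℝ} {T : Finset κ} {I : κ → Finset (Fin m)} {xp : κ → Fin n → ℝ} {Λ : ℝ}

theorem mul_sum_sInf_le_mul_sum_sqNorm_sub (hI : ∀ τ ∈ T, #(I τ) = δ)
    (hxp : ∀ τ ∈ T, IsKaczmarzUpdate A b (I τ) x (xp τ))
    (hΛ : ∀ τ ∈ T, maxEig ((rowSub A (I τ))ᵀ * rowSub A (I τ)) ≤ Λ) :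
    δ * ∑ τ ∈ T, sInf ((fun i => (A i ⬝ᵥ x - b i) ^ 2) '' I τ)
      ≤ Λ * ∑ τ ∈ T, sqNorm (xp τ - x) := by
  rw [Finset.mul_sum, Finset.mul_sum]
  refine Finset.sum_le_sum fun τ hτ => ?_
  rw [← hI τ hτ]
  exact (hxp τ hτ).card_mul_sInf_le.trans
    (mul_le_mul_of_nonneg_right (hΛ τ hτ) (sqNorm_nonneg _))

theorem sum_sqNorm_sub_le (hI : ∀ τ ∈ T, #(I τ) = δ)
    (hxp : ∀ τ ∈ T, IsKaczmarzUpdate A b (I τ) x (xp τ)) (hy : A *ᵥ y = b) (hΛ_nonneg : 0 ≤ Λ)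
    (hΛ : ∀ τ ∈ T, maxEig ((rowSub A (I τ))ᵀ * rowSub A (I τ)) ≤ Λ) :
    ∑ τ ∈ T, sqNorm (xp τ - y)
      ≤ #T * sqNorm (x - y) - δ * (∑ τ ∈ T, sInf ((fun i => (A i ⬝ᵥ x - b i) ^ 2) '' I τ)) / Λ := by
  have hpythagoras : ∑ τ ∈ T, sqNorm (xp τ - y)
      = #T * sqNorm (x - y) - ∑ τ ∈ T, sqNorm (xp τ - x) := by
    rw [← nsmul_eq_mul, ← Finset.sum_const, ← Finset.sum_sub_distrib]
    exact Finset.sum_congr rfl fun τ hτ => (hxp τ hτ).sqNorm_sub_eq_sub fun i _ => congrFun hy i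
  have hdrop := div_le_of_le_mul₀ hΛ_nonneg (Finset.sum_nonneg fun τ _ => sqNorm_nonneg (xp τ - x))
    ((mul_sum_sInf_le_mul_sum_sqNorm_sub hI hxp hΛ).trans_eq (mul_comm _ _))
  rw [hpythagoras]
  gcongr

end BlockFamily

theorem rbskm_one_step_general {m n : ℕ} {β δ : ℕ} (hβ : 1 ≤ β)
    {A : Matrix (Fin m) (Fin n) ℝ} {b : Fin m → ℝ}
    {xstar : Fin n → ℝ} (hconsistent : A.mulVec xstar = b)
    {x : Fin n → ℝ} (hx : x - xstar ∈ Set.range Aᵀ.mulVec)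
    {I : Finset (Fin m) → Finset (Fin m)}
    (hI : ∀ τ ∈ Finset.powersetCard β (Finset.univ : Finset (Fin m)), #(I τ) = δ)
    {xp : Finset (Fin m) → Fin n → ℝ}
    (hxp : ∀ τ ∈ Finset.powersetCard β (Finset.univ : Finset (Fin m)),
      IsKaczmarzUpdate A b (I τ) x (xp τ))
    {Λ : ℝ}
    (hΛ : Λ = sSup {μ : ℝ |
      ∃ τ ∈ Finset.powersetCard β (Finset.univ : Finset (Fin m)),
        μ = maxEig ((rowSub A (I τ))ᵀ * rowSub A (I τ))})
    {D : ℝ}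
    (hD : D = ∑ τ ∈ Finset.powersetCard β (Finset.univ : Finset (Fin m)),
      sInf ((fun i => (A i ⬝ᵥ x - b i) ^ 2) '' ↑(I τ)))
    (hDpos : 0 < D)
    {ξ : ℝ}
    (hξ : ξ = (∑ τ ∈ Finset.powersetCard β (Finset.univ : Finset (Fin m)),
      ∑ i ∈ τ, (A i ⬝ᵥ x - b i) ^ 2) / D) :
    (1 / (m.choose β : ℝ)) *
        ∑ τ ∈ Finset.powersetCard β (Finset.univ : Finset (Fin m)),
          sqNorm (xp τ - xstar) ≤
      (1 - ((δ : ℝ) / ξ) * ((β : ℝ) / (m : ℝ)) * (minPosEig (Aᵀ * A) / Λ)) *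
        sqNorm (x - xstar) := by
  set T := Finset.powersetCard β (Finset.univ : Finset (Fin m))
  set R := ∑ i, (A i ⬝ᵥ x - b i) ^ 2
  set E := sqNorm (x - xstar)
  have hcard : #T = m.choose β := by simp [T]
  have hCR : 0 < m.choose β * R := by
    rw [← hcard]
    exact (hD ▸ hDpos).trans_le (sum_sInf_image_le_card_mul_sum (fun i => sq_nonneg _) T I)
  have hR : 0 < R := pos_of_mul_pos_right hCR (Nat.cast_nonneg _)
  have hC : 0 < (m.choose β : ℝ) := pos_of_mul_pos_left hCR hR.le
  have hβm : β ≤ m := Nat.choose_ne_zero_iff.mp (Nat.cast_pos.mp hC).ne'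
  have hm : 0 < m := hβ.trans hβm
  replace hξ : ξ = m.choose β * (β / m * R) / D := by
    rw [hξ, sum_powersetCard_sum (by simpa using hβm), Finset.card_univ, Fintype.card_fin]
  have hξ_pos : 0 < ξ := by rw [hξ]; positivity
  have hD_mean : D / m.choose β = β / m * R / ξ := by rw [hξ]; field_simp
  have hΛ_nonneg : 0 ≤ Λ := hΛ ▸ Real.sSup_nonneg fun _ ⟨_, _, hμ⟩ =>
    hμ ▸ maxEig_nonneg (posSemidef_transpose_mul_self _)
  have hsum : ∑ τ ∈ T, sqNorm (xp τ - xstar) ≤ m.choose β * E - δ * D / Λ := by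
    rw [hD, ← hcard]
    exact sum_sqNorm_sub_le hI hxp hconsistent hΛ_nonneg fun τ hτ =>
      hΛ ▸ le_sSup_of_mem_finset (fun τ => maxEig ((rowSub A (I τ))ᵀ * rowSub A (I τ))) hτ
  calc
    _ ≤ 1 / (m.choose β : ℝ) * (m.choose β * E - δ * D / Λ) := by gcongr
    _ = E - δ * (D / m.choose β) / Λ := by field_simp
    _ = E - δ * (β / m * R / ξ) / Λ := by rw [hD_mean]
    _ ≤ E - δ * (β / m * (minPosEig (Aᵀ * A) * E) / ξ) / Λ := by
      gcongr
      exact minPosEig_mul_sqNorm_sub_le_sum_residual_sq hconsistent hx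
    _ = _ := by ring

theorem rbskm_one_step {m n : ℕ} (β δ : ℕ)
    (hδ : 1 ≤ δ) (hδβ : δ ≤ β) (hβm : β ≤ m)
    (A : Matrix (Fin m) (Fin n) ℝ) (hA : A ≠ 0) (b : Fin m → ℝ)
    (xstar : Fin n → ℝ) (hconsistent : A.mulVec xstar = b)
    (hxstar : xstar ∈ Set.range Aᵀ.mulVec)
    (x : Fin n → ℝ) (hx : x ∈ Set.range Aᵀ.mulVec)
    (I : Finset (Fin m) → Finset (Fin m))
    (hI : ∀ τ ∈ Finset.powersetCard β (Finset.univ : Finset (Fin m)),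
      IsGreedySubset A b x δ τ (I τ))
    (xp : Finset (Fin m) → Fin n → ℝ)
    (hxp : ∀ τ ∈ Finset.powersetCard β (Finset.univ : Finset (Fin m)),
      IsKaczmarzUpdate A b (I τ) x (xp τ))
    (Λ : ℝ)
    (hΛ : Λ = sSup {μ : ℝ |
      ∃ τ ∈ Finset.powersetCard β (Finset.univ : Finset (Fin m)),
        μ = maxEig ((rowSub A (I τ))ᵀ * rowSub A (I τ))})
    (D : ℝ)
    (hD : D = ∑ τ ∈ Finset.powersetCard β (Finset.univ : Finset (Fin m)),
      sInf ((fun i => (A i ⬝ᵥ x - b i) ^ 2) '' ↑(I τ)))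
    (hDpos : 0 < D)
    (ξ : ℝ)
    (hξ : ξ = (∑ τ ∈ Finset.powersetCard β (Finset.univ : Finset (Fin m)),
      ∑ i ∈ τ, (A i ⬝ᵥ x - b i) ^ 2) / D) :
    (1 / (m.choose β : ℝ)) *
        ∑ τ ∈ Finset.powersetCard β (Finset.univ : Finset (Fin m)),
          sqNorm (xp τ - xstar) ≤
      (1 - ((δ : ℝ) / ξ) * ((β : ℝ) / (m : ℝ)) * (minPosEig (Aᵀ * A) / Λ)) *
        sqNorm (x - xstar) :=
  rbskm_one_step_general (hδ.trans hδβ) hconsistent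
    ((mulVecLin Aᵀ).range.sub_mem hx hxstar) (fun τ hτ => (hI τ hτ).2.1) hxp hΛ hD hDpos hξ
end

section
/- Let I ⊆ {1,…,m} be an index set with λ_max(A_IᵀA_I) > 0, let x ∈ ℝ^n, and let x⁺ be the exact block Kaczmarz update of x with respect to I. Then ‖x⁺ − x⋆‖₂² ≤ ‖x − x⋆‖₂² − ‖A_I x − b_I‖₂² / λ_max(A_IᵀA_I). -/
open Matrix Finset

/-!
The update `xp` is the orthogonal projection of `x` onto the solutions of the equations in `I`, so
`x - xp` is orthogonal to `xp - y` for every such solution `y`, and Pythagoras makes the decrease of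
the squared distance to `y` equal to `‖x - xp‖²`. Since `A_I xp = b_I`, the residual `A_I x - b_I`
is `A_I (x - xp)`, whose squared norm is at most `λ_max(A_Iᵀ A_I) ‖x - xp‖²`.
-/

section DotProduct

variable {n R : Type*} [Fintype n]

theorem add_dotProduct_add_self [CommSemiring R] (u v : n → R) :
    (u + v) ⬝ᵥ (u + v) = u ⬝ᵥ u + 2 * (u ⬝ᵥ v) + v ⬝ᵥ v := by
  rw [dotProduct_add, add_dotProduct, add_dotProduct, dotProduct_comm v u]
  ring

theorem dotProduct_eq_zero_of_forall_dotProduct_self_le [Field R] [LinearOrder R]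
    [IsStrictOrderedRing R] {u v : n → R}
    (hmin : ∀ t : R, u ⬝ᵥ u ≤ (u + t • v) ⬝ᵥ (u + t • v)) : u ⬝ᵥ v = 0 := by
  have quadratic_nonneg (t : R) : 0 ≤ v ⬝ᵥ v * (t * t) + 2 * (u ⬝ᵥ v) * t + 0 := by
    have := hmin t
    simp only [add_dotProduct_add_self, dotProduct_smul, smul_dotProduct, smul_eq_mul] at this
    linarith
  simpa [discrim, sq_nonpos_iff] using discrim_le_zero quadratic_nonneg

end DotProduct

section Rayleigh

open scoped ComplexOrder MatrixOrder

variable {m n 𝕜 : Type*} [Fintype m] [Fintype n] [DecidableEq n] [RCLike 𝕜]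

theorem star_dotProduct_mulVec_le_of_spectrum_le {M : Matrix n n 𝕜} (hM : M.IsHermitian) {c : ℝ}
    (hc : ∀ μ ∈ spectrum ℝ M, μ ≤ c) (v : n → 𝕜) :
    star v ⬝ᵥ M *ᵥ v ≤ c * (star v ⬝ᵥ v) := by
  have hle : M ≤ algebraMap ℝ (Matrix n n 𝕜) c :=
    le_algebraMap_of_spectrum_le hc hM.isSelfAdjoint
  have hnonneg := (Matrix.le_iff.mp hle).dotProduct_mulVec_nonneg v
  rwa [sub_mulVec, dotProduct_sub, sub_nonneg, Algebra.algebraMap_eq_smul_one, smul_mulVec,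
    one_mulVec, dotProduct_smul, RCLike.real_smul_eq_coe_mul] at hnonneg

theorem star_mulVec_dotProduct_mulVec_le_of_spectrum_le (B : Matrix m n 𝕜) {c : ℝ}
    (hc : ∀ μ ∈ spectrum ℝ (Bᴴ * B), μ ≤ c) (v : n → 𝕜) :
    star (B *ᵥ v) ⬝ᵥ B *ᵥ v ≤ c * (star v ⬝ᵥ v) := by
  rw [star_mulVec, ← dotProduct_mulVec, mulVec_mulVec]
  exact star_dotProduct_mulVec_le_of_spectrum_le (isHermitian_conjTranspose_mul_self B) hc v

end Rayleigh

theorem le_maxEig_of_mem_spectrum {k : ℕ} {M : Matrix (Fin k) (Fin k) ℝ} {μ : ℝ}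
    (hμ : μ ∈ spectrum ℝ M) : μ ≤ maxEig M := by
  rw [← spectrum_toLin'] at hμ
  exact le_csSup (Module.End.finite_hasEigenvalue M.mulVecLin).bddAbove
    (Module.End.HasUnifEigenvalue.of_mem_spectrum hμ)

theorem sqNorm_eq_dotProduct_self {k : ℕ} (v : Fin k → ℝ) : sqNorm v = v ⬝ᵥ v := by
  simp only [sqNorm, dotProduct, sq]

section Kaczmarz

variable {m n : ℕ} {A : Matrix (Fin m) (Fin n) ℝ} {b : Fin m → ℝ} {I : Finset (Fin m)}
  {x xp y : Fin n → ℝ}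

theorem sum_sq_dotProduct_le_maxEig_mul_sqNorm (A : Matrix (Fin m) (Fin n) ℝ)
    (I : Finset (Fin m)) (v : Fin n → ℝ) :
    ∑ i ∈ I, (A i ⬝ᵥ v) ^ 2 ≤ maxEig ((rowSub A I)ᵀ * rowSub A I) * sqNorm v := by
  have hsum : ∑ i ∈ I, (A i ⬝ᵥ v) ^ 2 = rowSub A I *ᵥ v ⬝ᵥ rowSub A I *ᵥ v := by
    rw [← Finset.sum_coe_sort]
    simp only [sq]
    rfl
  rw [hsum, sqNorm_eq_dotProduct_self]
  exact star_mulVec_dotProduct_mulVec_le_of_spectrum_le (rowSub A I)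
    (fun _ ↦ le_maxEig_of_mem_spectrum) v

theorem sum_sq_residual_le_maxEig_mul_sqNorm_sub (x : Fin n → ℝ)
    (hy : ∀ i ∈ I, A i ⬝ᵥ y = b i) :
    ∑ i ∈ I, (A i ⬝ᵥ x - b i) ^ 2 ≤
      maxEig ((rowSub A I)ᵀ * rowSub A I) * sqNorm (x - y) := by
  calc ∑ i ∈ I, (A i ⬝ᵥ x - b i) ^ 2
      = ∑ i ∈ I, (A i ⬝ᵥ (x - y)) ^ 2 :=
        Finset.sum_congr rfl fun i hi ↦ by rw [dotProduct_sub, hy i hi]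
    _ ≤ maxEig ((rowSub A I)ᵀ * rowSub A I) * sqNorm (x - y) :=
        sum_sq_dotProduct_le_maxEig_mul_sqNorm A I (x - y)

namespace IsKaczmarzUpdate

theorem dotProduct_sub_eq_zero_s1 (hxp : IsKaczmarzUpdate A b I x xp)
    (hy : ∀ i ∈ I, A i ⬝ᵥ y = b i) : (xp - x) ⬝ᵥ (xp - y) = 0 := by
  obtain ⟨hsol, hmin⟩ := hxp
  refine dotProduct_eq_zero_of_forall_dotProduct_self_le fun t ↦ ?_
  have line_sol : ∀ i ∈ I, A i ⬝ᵥ (xp + t • (xp - y)) = b i := fun i hi ↦ by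
    simp only [dotProduct_add, dotProduct_smul, dotProduct_sub, hsol i hi, hy i hi, sub_self,
      smul_zero, add_zero]
  simpa only [sqNorm_eq_dotProduct_self, add_sub_right_comm] using hmin _ line_sol

theorem sqNorm_sub_eq_add (hxp : IsKaczmarzUpdate A b I x xp)
    (hy : ∀ i ∈ I, A i ⬝ᵥ y = b i) :
    sqNorm (x - y) = sqNorm (x - xp) + sqNorm (xp - y) := by
  have horth : (x - xp) ⬝ᵥ (xp - y) = 0 := by
    rw [← neg_sub xp x, neg_dotProduct, hxp.dotProduct_sub_eq_zero_s1 hy, neg_zero]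
  rw [← sub_add_sub_cancel x xp y]
  simp only [sqNorm_eq_dotProduct_self, add_dotProduct_add_self, horth, mul_zero, add_zero]

end IsKaczmarzUpdate

theorem block_kaczmarz_one_step_general
    (hpos : 0 < maxEig ((rowSub A I)ᵀ * rowSub A I))
    (hxp : IsKaczmarzUpdate A b I x xp) (hy : ∀ i ∈ I, A i ⬝ᵥ y = b i) :
    sqNorm (xp - y) ≤
      sqNorm (x - y) -
        (∑ i ∈ I, (A i ⬝ᵥ x - b i) ^ 2) / maxEig ((rowSub A I)ᵀ * rowSub A I) := by
  have hstep : (∑ i ∈ I, (A i ⬝ᵥ x - b i) ^ 2) / maxEig ((rowSub A I)ᵀ * rowSub A I) ≤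
      sqNorm (x - xp) :=
    (div_le_iff₀' hpos).mpr (sum_sq_residual_le_maxEig_mul_sqNorm_sub x hxp.1)
  rw [hxp.sqNorm_sub_eq_add hy]
  linarith

end Kaczmarz

theorem block_kaczmarz_one_step {m n : ℕ}
    (A : Matrix (Fin m) (Fin n) ℝ) (hA : A ≠ 0) (b : Fin m → ℝ)
    (xstar : Fin n → ℝ) (hconsistent : A.mulVec xstar = b)
    (hxstar : xstar ∈ Set.range Aᵀ.mulVec)
    (I : Finset (Fin m))
    (hpos : 0 < maxEig ((rowSub A I)ᵀ * rowSub A I))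
    (x xp : Fin n → ℝ)
    (hxp : IsKaczmarzUpdate A b I x xp) :
    sqNorm (xp - xstar) ≤
      sqNorm (x - xstar) -
        (∑ i ∈ I, (A i ⬝ᵥ x - b i) ^ 2) / maxEig ((rowSub A I)ᵀ * rowSub A I) :=
  block_kaczmarz_one_step_general hpos hxp fun i _ ↦ congrFun hconsistent i
end

section
/- Let 1 ≤ δ ≤ β ≤ m, let x ∈ ℝ^n, and for each subset τ ⊆ {1,…,m} of cardinality β let I(τ) be a greedy δ-subset of τ for x. Assume D := Σ_τ min_{i∈I(τ)} (A^{(i)}x − b_i)² > 0 and set ξ = (Σ_τ ‖A_τ x − b_τ‖₂²) / D. Then ξ ≥ δ, and consequently 0 ≤ 1 − (δ/ξ)·(β/m)·λ_min⁺(AᵀA)/λ_max(AᵀA) < 1. -/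
open Matrix Finset

section MinimaOverSubsets

variable {ι M : Type*} [AddCommMonoid M] [ConditionallyCompleteLattice M] [IsOrderedAddMonoid M]
  {f : ι → M}

theorem card_nsmul_sInf_image_le_sum (s : Finset ι) : #s • sInf (f '' s) ≤ ∑ i ∈ s, f i :=
  s.card_nsmul_le_sum f _ fun _ hi ↦
    csInf_le (s.finite_toSet.image f).bddBelow (Set.mem_image_of_mem f hi)

theorem nsmul_sum_sInf_image_le_sum_sum {𝒯 : Finset (Finset ι)} {I : Finset ι → Finset ι} {δ : ℕ}
    (hI : ∀ τ ∈ 𝒯, I τ ⊆ τ ∧ #(I τ) = δ) (hf : ∀ τ ∈ 𝒯, ∀ i ∈ τ, 0 ≤ f i) :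
    δ • ∑ τ ∈ 𝒯, sInf (f '' I τ) ≤ ∑ τ ∈ 𝒯, ∑ i ∈ τ, f i := by
  rw [← sum_nsmul]
  refine sum_le_sum fun τ hτ ↦ ?_
  obtain ⟨hsub, rfl⟩ := hI τ hτ
  exact (card_nsmul_sInf_image_le_sum (I τ)).trans <|
    sum_le_sum_of_subset_of_nonneg hsub fun i hi _ ↦ hf τ hτ i hi

end MinimaOverSubsets

section Eigenvalues

open scoped ComplexOrder in
theorem exists_pos_hasEigenvalue_mulVecLin {𝕜 n : Type*} [RCLike 𝕜] [Fintype n]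
    {M : Matrix n n 𝕜} (hM : M.PosSemidef) (hM₀ : M ≠ 0) :
    ∃ μ : 𝕜, Module.End.HasEigenvalue M.mulVecLin μ ∧ 0 < μ := by
  classical
  obtain ⟨i, hi⟩ : ∃ i, hM.isHermitian.eigenvalues i ≠ 0 :=
    Function.ne_iff.mp (hM.isHermitian.eigenvalues_eq_zero_iff.not.mpr hM₀)
  have hpos : 0 < hM.isHermitian.eigenvalues i := (hM.eigenvalues_nonneg i).lt_of_ne' hi
  refine ⟨hM.isHermitian.eigenvalues i, ?_, RCLike.ofReal_pos.mpr hpos⟩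
  rw [← Matrix.toLin'_apply', Module.End.hasEigenvalue_iff_mem_spectrum, Matrix.spectrum_toLin',
    hM.isHermitian.spectrum_eq_image_range]
  exact Set.mem_image_of_mem _ (Set.mem_range_self i)

variable {k : ℕ} {M : Matrix (Fin k) (Fin k) ℝ}

theorem hasEigenvalue_minPosEig_and_pos
    (h : ∃ μ : ℝ, Module.End.HasEigenvalue M.mulVecLin μ ∧ 0 < μ) :
    Module.End.HasEigenvalue M.mulVecLin (minPosEig M) ∧ 0 < minPosEig M :=
  Set.Nonempty.csInf_mem h <|
    (Module.End.finite_hasEigenvalue M.mulVecLin).subset fun _ hμ ↦ hμ.1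

theorem le_maxEig {μ : ℝ} (hμ : Module.End.HasEigenvalue M.mulVecLin μ) : μ ≤ maxEig M :=
  le_csSup (Module.End.finite_hasEigenvalue M.mulVecLin).bddAbove hμ

end Eigenvalues

theorem div_mem_Ioc_zero_one {K : Type*} [Semifield K] [LinearOrder K] [IsStrictOrderedRing K]
    {a b : K} (ha : 0 < a) (hab : a ≤ b) : a / b ∈ Set.Ioc 0 1 :=
  have hb : 0 < b := ha.trans_le hab
  ⟨div_pos ha hb, (div_le_one₀ hb).mpr hab⟩

theorem mul_mem_Ioc_zero_one {R : Type*} [Semiring R] [PartialOrder R] [IsStrictOrderedRing R]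
    {a b : R} (ha : a ∈ Set.Ioc 0 1) (hb : b ∈ Set.Ioc 0 1) : a * b ∈ Set.Ioc 0 1 :=
  ⟨mul_pos ha.1 hb.1, mul_le_one₀ ha.2 hb.1.le hb.2⟩

theorem minPosEig_div_maxEig_mem_Ioc_zero_one {k : ℕ} {M : Matrix (Fin k) (Fin k) ℝ}
    (hM : M.PosSemidef) (hM₀ : M ≠ 0) : minPosEig M / maxEig M ∈ Set.Ioc 0 1 := by
  obtain ⟨heig, hpos⟩ :=
    hasEigenvalue_minPosEig_and_pos (exists_pos_hasEigenvalue_mulVecLin hM hM₀)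
  exact div_mem_Ioc_zero_one hpos (le_maxEig heig)

theorem xi_lower_bound_and_convergence_factor_general {ι : Type*} [Fintype ι] {n : ℕ} (β δ : ℕ)
    (hδ : 1 ≤ δ) (hδβ : δ ≤ β) (hβ : β ≤ Fintype.card ι)
    (A : Matrix ι (Fin n) ℝ) (hA : A ≠ 0) (b : ι → ℝ) (x : Fin n → ℝ)
    (I : Finset ι → Finset ι)
    (hI : ∀ τ ∈ powersetCard β (univ : Finset ι), I τ ⊆ τ ∧ #(I τ) = δ)
    (D : ℝ)
    (hD : D = ∑ τ ∈ powersetCard β (univ : Finset ι),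
      sInf ((fun i ↦ (A i ⬝ᵥ x - b i) ^ 2) '' I τ))
    (hDpos : 0 < D)
    (ξ : ℝ)
    (hξ : ξ = (∑ τ ∈ powersetCard β (univ : Finset ι), ∑ i ∈ τ, (A i ⬝ᵥ x - b i) ^ 2) / D) :
    (δ : ℝ) ≤ ξ ∧
    0 ≤ 1 - ((δ : ℝ) / ξ) * ((β : ℝ) / (Fintype.card ι : ℝ)) *
        (minPosEig (Aᵀ * A) / maxEig (Aᵀ * A)) ∧
    1 - ((δ : ℝ) / ξ) * ((β : ℝ) / (Fintype.card ι : ℝ)) *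
        (minPosEig (Aᵀ * A) / maxEig (Aᵀ * A)) < 1 := by
  have hδξ : (δ : ℝ) ≤ ξ := by
    rw [hξ, le_div_iff₀ hDpos, hD, ← nsmul_eq_mul]
    exact nsmul_sum_sInf_image_le_sum_sum hI fun _ _ _ _ ↦ sq_nonneg _
  have hspectral : minPosEig (Aᵀ * A) / maxEig (Aᵀ * A) ∈ Set.Ioc 0 1 := by
    rw [← conjTranspose_eq_transpose_of_trivial]
    exact minPosEig_div_maxEig_mem_Ioc_zero_one (posSemidef_conjTranspose_mul_self A)
      (conjTranspose_mul_self_eq_zero.not.mpr hA)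
  have hδ₀ : (0 : ℝ) < δ := Nat.cast_pos.mpr hδ
  have hβ₀ : (0 : ℝ) < β := Nat.cast_pos.mpr (hδ.trans hδβ)
  exact ⟨hδξ, Set.sub_mem_Ico_zero_iff_right.mpr <| mul_mem_Ioc_zero_one
    (mul_mem_Ioc_zero_one (div_mem_Ioc_zero_one hδ₀ hδξ)
      (div_mem_Ioc_zero_one hβ₀ (Nat.cast_le.mpr hβ))) hspectral⟩

theorem xi_lower_bound_and_convergence_factor {m n : ℕ} (β δ : ℕ)
    (hδ : 1 ≤ δ) (hδβ : δ ≤ β) (hβm : β ≤ m)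
    (A : Matrix (Fin m) (Fin n) ℝ) (hA : A ≠ 0) (b : Fin m → ℝ)
    (hconsistent : ∃ z : Fin n → ℝ, A.mulVec z = b)
    (x : Fin n → ℝ)
    (I : Finset (Fin m) → Finset (Fin m))
    (hI : ∀ τ ∈ Finset.powersetCard β (Finset.univ : Finset (Fin m)),
      IsGreedySubset A b x δ τ (I τ))
    (D : ℝ)
    (hD : D = ∑ τ ∈ Finset.powersetCard β (Finset.univ : Finset (Fin m)),
      sInf ((fun i => (A i ⬝ᵥ x - b i) ^ 2) '' ↑(I τ)))
    (hDpos : 0 < D)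
    (ξ : ℝ)
    (hξ : ξ = (∑ τ ∈ Finset.powersetCard β (Finset.univ : Finset (Fin m)),
      ∑ i ∈ τ, (A i ⬝ᵥ x - b i) ^ 2) / D) :
    (δ : ℝ) ≤ ξ ∧
    0 ≤ 1 - ((δ : ℝ) / ξ) * ((β : ℝ) / (m : ℝ)) *
        (minPosEig (Aᵀ * A) / maxEig (Aᵀ * A)) ∧
    1 - ((δ : ℝ) / ξ) * ((β : ℝ) / (m : ℝ)) *
        (minPosEig (Aᵀ * A) / maxEig (Aᵀ * A)) < 1 := by
  simpa only [Fintype.card_fin] using xi_lower_bound_and_convergence_factor_general β δ hδ hδβ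
    (by rwa [Fintype.card_fin]) A hA b x I (fun τ hτ ↦ (hI τ hτ).imp_right And.left)
    D hD hDpos ξ hξ
end

section
/- Assume A is standardized. Let x ∈ range(Aᵀ) with Ax ≠ b, let i ∈ {1,…,m} be an index maximizing |A^{(i)}x − b_i|, and set x⁺ = x − (A^{(i)}x − b_i)·(A^{(i)})ᵀ. Then ‖x⁺ − x⋆‖₂² ≤ (1 − λ_min⁺(AᵀA) · ‖Ax − b‖_∞² / ‖Ax − b‖₂²) · ‖x − x⋆‖₂². -/
open Matrix Finset

/-!
Write `e = x - x⋆`, so that the residual is `A e`. A Kaczmarz step along row `i` removes from `e`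
its component along `Aᵢ`, so by Pythagoras `‖e‖²` drops by `(A e)ᵢ² / ‖Aᵢ‖²`. Since `e` lies in the
row space of `A`, which is the orthogonal complement of `ker (Aᵀ A)`, only positive eigenvalues of
`Aᵀ A` enter the spectral expansion of `‖A e‖² = ⟪Aᵀ A e, e⟫`, whence `λ_min⁺ ‖e‖² ≤ ‖A e‖²`. This
turns the drop into a multiple of `‖e‖²`; for Motzkin's choice of `i`, `(A e)ᵢ² = ‖A e‖_∞²`.
-/

section Spectral

variable {𝕜 E : Type*} [RCLike 𝕜] [NormedAddCommGroup E] [InnerProductSpace 𝕜 E]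
  [FiniteDimensional 𝕜 E] {T : E →ₗ[𝕜] E}

theorem re_inner_apply_self_eq_sum_eigenvalues (hT : T.IsSymmetric) (e : E) :
    RCLike.re (inner 𝕜 (T e) e) =
      ∑ j, hT.eigenvalues rfl j * ‖inner 𝕜 (hT.eigenvectorBasis rfl j) e‖ ^ 2 := by
  rw [← (hT.eigenvectorBasis rfl).sum_inner_mul_inner, map_sum]
  refine sum_congr rfl fun j _ => ?_
  rw [hT, hT.apply_eigenvectorBasis, inner_smul_right, mul_assoc, RCLike.re_ofReal_mul,
    inner_mul_symm_re_eq_norm, norm_mul, norm_inner_symm e, sq]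

theorem mul_norm_sq_le_re_inner_of_mem_ker_orthogonal (hT : T.IsSymmetric) {c : ℝ}
    (hc : ∀ μ : ℝ, Module.End.HasEigenvalue T (μ : 𝕜) → μ ≠ 0 → c ≤ μ) {e : E} (he : e ∈ T.kerᗮ) :
    c * ‖e‖ ^ 2 ≤ RCLike.re (inner 𝕜 (T e) e) := by
  rw [re_inner_apply_self_eq_sum_eigenvalues hT,
    ← (hT.eigenvectorBasis rfl).sum_sq_norm_inner_right, mul_sum]
  refine sum_le_sum fun j _ => ?_
  by_cases hj : hT.eigenvalues rfl j = 0
  · have hker : hT.eigenvectorBasis rfl j ∈ T.ker := by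
      rw [LinearMap.mem_ker, hT.apply_eigenvectorBasis, hj, RCLike.ofReal_zero, zero_smul]
    simp [Submodule.inner_right_of_mem_orthogonal hker he]
  · gcongr
    exact hc _ (hT.hasEigenvalue_eigenvalues rfl j) hj

end Spectral

section SqNorm

variable {k : ℕ}

theorem sqNorm_eq_norm_sq (v : Fin k → ℝ) : sqNorm v = ‖WithLp.toLp 2 v‖ ^ 2 :=
  (EuclideanSpace.real_norm_sq_eq _).symm

theorem sqNorm_pos {v : Fin k → ℝ} (hv : v ≠ 0) : 0 < sqNorm v := by
  rw [sqNorm_eq_norm_sq]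
  exact pow_pos (norm_pos_iff.2 <| (WithLp.toLp_eq_zero 2).not.2 hv) 2

theorem sqNorm_sub_dotProduct_div_sqNorm_smul {a : Fin k → ℝ} (ha : a ≠ 0) (e : Fin k → ℝ) :
    sqNorm (e - (a ⬝ᵥ e / sqNorm a) • a) = sqNorm e - (a ⬝ᵥ e) ^ 2 / sqNorm a := by
  have hpos := sqNorm_pos ha
  simp only [sqNorm_eq_dotProduct, sub_dotProduct, dotProduct_sub, smul_dotProduct,
    dotProduct_smul, smul_eq_mul, dotProduct_comm e a] at hpos ⊢
  field_simp
  ring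

end SqNorm

section MinPosEig

theorem minPosEig_le_of_hasEigenvalue {k : ℕ} {M : Matrix (Fin k) (Fin k) ℝ} {μ : ℝ}
    (hμ : Module.End.HasEigenvalue M.mulVecLin μ) (hpos : 0 < μ) : minPosEig M ≤ μ :=
  csInf_le ⟨0, fun _ hν => hν.2.le⟩ ⟨hμ, hpos⟩

theorem hasEigenvalue_toEuclideanLin_iff {𝕜 ι : Type*} [RCLike 𝕜] [Fintype ι] [DecidableEq ι]
    {M : Matrix ι ι 𝕜} {μ : 𝕜} :
    Module.End.HasEigenvalue M.toEuclideanLin μ ↔ Module.End.HasEigenvalue M.mulVecLin μ := by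
  rw [Module.End.hasEigenvalue_iff_mem_spectrum, Module.End.hasEigenvalue_iff_mem_spectrum,
    spectrum_toLpLin, ← toLin'_apply', spectrum_toLin']

theorem minPosEig_mul_sqNorm_le_of_posSemidef {k : ℕ} {M : Matrix (Fin k) (Fin k) ℝ}
    (hM : M.PosSemidef) {e : Fin k → ℝ} (he : ∀ v, M *ᵥ v = 0 → v ⬝ᵥ e = 0) :
    minPosEig M * sqNorm e ≤ e ⬝ᵥ M *ᵥ e := by
  have hT : M.toEuclideanLin.IsPositive := isPositive_toEuclideanLin_iff.2 hM
  have hc (μ : ℝ) (hμ : Module.End.HasEigenvalue M.toEuclideanLin μ) (hne : μ ≠ 0) :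
      minPosEig M ≤ μ :=
    have hnonneg : 0 ≤ μ :=
      eigenvalue_nonneg_of_nonneg hμ fun v => by
        rw [← hT.isSymmetric]; exact hT.re_inner_nonneg_left v
    minPosEig_le_of_hasEigenvalue (hasEigenvalue_toEuclideanLin_iff.1 hμ) (hnonneg.lt_of_ne' hne)
  have hmem : WithLp.toLp 2 e ∈ M.toEuclideanLin.kerᗮ := by
    refine (Submodule.mem_orthogonal _ _).2 fun v hv => ?_
    rw [EuclideanSpace.inner_eq_star_dotProduct, star_trivial, dotProduct_comm]
    exact he v.ofLp (congrArg WithLp.ofLp hv)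
  have h := mul_norm_sq_le_re_inner_of_mem_ker_orthogonal hT.isSymmetric hc hmem
  rw [← sqNorm_eq_norm_sq] at h
  simpa [EuclideanSpace.inner_toLp_toLp] using h

theorem minPosEig_transpose_mul_self_mul_sqNorm_le {m n : ℕ} (A : Matrix (Fin m) (Fin n) ℝ)
    {e : Fin n → ℝ} (he : e ∈ Set.range Aᵀ.mulVec) :
    minPosEig (Aᵀ * A) * sqNorm e ≤ sqNorm (A *ᵥ e) := by
  obtain ⟨w, rfl⟩ := he
  have hker (v : Fin n → ℝ) (hv : (Aᵀ * A) *ᵥ v = 0) : v ⬝ᵥ Aᵀ *ᵥ w = 0 := by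
    have hAv : A *ᵥ v = 0 := (conjTranspose_mul_self_mulVec_eq_zero A v).1 hv
    rw [dotProduct_mulVec, vecMul_transpose, hAv, zero_dotProduct]
  calc minPosEig (Aᵀ * A) * sqNorm (Aᵀ *ᵥ w)
      ≤ (Aᵀ *ᵥ w) ⬝ᵥ (Aᵀ * A) *ᵥ (Aᵀ *ᵥ w) :=
        minPosEig_mul_sqNorm_le_of_posSemidef (posSemidef_conjTranspose_mul_self A) hker
    _ = sqNorm (A *ᵥ (Aᵀ *ᵥ w)) := by
        rw [sqNorm_eq_dotProduct, ← mulVec_mulVec, dotProduct_mulVec (Aᵀ *ᵥ w), vecMul_transpose]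

end MinPosEig

theorem sqNorm_kaczmarz_step_sub_le {m n : ℕ} (A : Matrix (Fin m) (Fin n) ℝ) {b : Fin m → ℝ}
    {xstar : Fin n → ℝ} (hconsistent : A *ᵥ xstar = b) {x : Fin n → ℝ}
    (hx : x - xstar ∈ Set.range Aᵀ.mulVec) (hres : A *ᵥ x ≠ b) {i : Fin m} (hi : A i ≠ 0) :
    sqNorm (x - ((A i ⬝ᵥ x - b i) / sqNorm (A i)) • A i - xstar) ≤
      (1 - minPosEig (Aᵀ * A) * (A i ⬝ᵥ x - b i) ^ 2 / (sqNorm (A i) * sqNorm (A *ᵥ x - b))) *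
        sqNorm (x - xstar) := by
  have hresid : A *ᵥ x - b = A *ᵥ (x - xstar) := by rw [mulVec_sub, hconsistent]
  have hrow : A i ⬝ᵥ x - b i = A i ⬝ᵥ (x - xstar) := congrFun hresid i
  have hpos : 0 < sqNorm (A *ᵥ (x - xstar)) := hresid ▸ sqNorm_pos (sub_ne_zero.2 hres)
  rw [hrow, hresid, sub_right_comm, sqNorm_sub_dotProduct_div_sqNorm_smul hi]
  set drop := (A i ⬝ᵥ (x - xstar)) ^ 2 / sqNorm (A i) with hdrop
  have hdrop_nonneg : 0 ≤ drop := div_nonneg (sq_nonneg _) (sqNorm_pos hi).le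
  have hratio : minPosEig (Aᵀ * A) * sqNorm (x - xstar) / sqNorm (A *ᵥ (x - xstar)) ≤ 1 :=
    (div_le_one hpos).2 (minPosEig_transpose_mul_self_mul_sqNorm_le A hx)
  calc sqNorm (x - xstar) - drop
      ≤ sqNorm (x - xstar) -
          drop * (minPosEig (Aᵀ * A) * sqNorm (x - xstar) / sqNorm (A *ᵥ (x - xstar))) :=
        sub_le_sub_left (mul_le_of_le_one_right hdrop_nonneg hratio) _
    _ = _ := by rw [hdrop]; ring

theorem row_ne_zero_of_forall_abs_residual_le {ι κ : Type*} [Fintype κ] {A : Matrix ι κ ℝ}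
    {b : ι → ℝ} (hconsistent : b ∈ Set.range A.mulVec) {x : κ → ℝ} (hres : A *ᵥ x ≠ b) {i : ι}
    (hi : ∀ j, |A j ⬝ᵥ x - b j| ≤ |A i ⬝ᵥ x - b i|) : A i ≠ 0 := by
  obtain ⟨y, rfl⟩ := hconsistent
  intro hzero
  refine hres (funext fun j => sub_eq_zero.1 (abs_nonpos_iff.1 ((hi j).trans_eq ?_)))
  simp [mulVec, hzero]

theorem motzkin_one_step_general {m n : ℕ} (A : Matrix (Fin m) (Fin n) ℝ) {b : Fin m → ℝ}
    {xstar : Fin n → ℝ} (hconsistent : A *ᵥ xstar = b) {x : Fin n → ℝ}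
    (hx : x - xstar ∈ Set.range Aᵀ.mulVec) (hres : A *ᵥ x ≠ b) {i : Fin m}
    (hi : ∀ j, |A j ⬝ᵥ x - b j| ≤ |A i ⬝ᵥ x - b i|) :
    sqNorm (x - ((A i ⬝ᵥ x - b i) / sqNorm (A i)) • A i - xstar) ≤
      (1 - minPosEig (Aᵀ * A) * (sSup (Set.range fun j => |(A *ᵥ x) j - b j|)) ^ 2 /
          (sqNorm (A i) * sqNorm (A *ᵥ x - b))) *
        sqNorm (x - xstar) := by
  have hsup : sSup (Set.range fun j => |(A *ᵥ x) j - b j|) = |A i ⬝ᵥ x - b i| :=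
    IsGreatest.csSup_eq ⟨Set.mem_range_self i, Set.forall_mem_range.2 hi⟩
  rw [hsup, sq_abs]
  exact sqNorm_kaczmarz_step_sub_le A hconsistent hx hres
    (row_ne_zero_of_forall_abs_residual_le ⟨xstar, hconsistent⟩ hres hi)

theorem motzkin_one_step {m n : ℕ}
    (A : Matrix (Fin m) (Fin n) ℝ) (hA : A ≠ 0)
    (hstd : ∀ i : Fin m, ∑ j, (A i j) ^ 2 = 1)
    (b : Fin m → ℝ)
    (xstar : Fin n → ℝ) (hconsistent : A.mulVec xstar = b)
    (hxstar : xstar ∈ Set.range Aᵀ.mulVec)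
    (x : Fin n → ℝ) (hx : x ∈ Set.range Aᵀ.mulVec)
    (hres : A.mulVec x ≠ b)
    (i : Fin m) (hi : ∀ j : Fin m, |A j ⬝ᵥ x - b j| ≤ |A i ⬝ᵥ x - b i|)
    (xp : Fin n → ℝ)
    (hxp : xp = fun j => x j - (A i ⬝ᵥ x - b i) * A i j) :
    sqNorm (xp - xstar) ≤
      (1 - minPosEig (Aᵀ * A) *
          (sSup (Set.range fun j : Fin m => |A.mulVec x j - b j|)) ^ 2 /
            sqNorm (A.mulVec x - b)) *
        sqNorm (x - xstar) := by
  have hunit : sqNorm (A i) = 1 := hstd i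
  simpa only [hunit, div_one, one_mul, hxp] using!
    motzkin_one_step_general A hconsistent (Aᵀ.mulVecLin.range.sub_mem hx hxstar) hres hi
end
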